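/- arXiv:2211.08242 — 3 statements merged into one kernel-verified Lean document; each statement's English description precedes it below -/
import Mathlib

section
/- Let V be a separable real Hilbert space and V' a real normed vector space. For every continuous map f : V → V' there exists a sequence (f_n) of maps f_n : V → V', each of which is Lipschitz continuous and has bounded range, such that f_n converges to f uniformly on every compact subset of V. -/
/-- Let `V` be a separable real Hilbert space and `V'` a real normed space. For
every continuous map `f : V → V'` there exists a sequence of Lipschitz maps
`F n : V → V'` with bounded range converging to `f` uniformly on every compact
subset of `V`. -/
theorem stmt_0 {V V' : Type*} [NormedAddCommGroup V] [InnerProductSpace ℝ V]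
    [CompleteSpace V] [TopologicalSpace.SeparableSpace V]
    [NormedAddCommGroup V'] [NormedSpace ℝ V']
    (f : V → V') (hf : Continuous f) :
    ∃ F : ℕ → V → V',
      (∀ n, ∃ K : NNReal, LipschitzWith K (F n)) ∧
      (∀ n, Bornology.IsBounded (Set.range (F n))) ∧
      (∀ K : Set V, IsCompact K → TendstoUniformlyOn (fun n x => F n x) f Filter.atTop K) := by
  classical
  obtain ⟨d, hd⟩ := TopologicalSpace.exists_dense_seq V
  let A : ℕ → Set V := fun n => Set.image d (Finset.range (n+1) : Set ℕ)
  let c : ℕ → ℝ := fun n => 1 / ((n : ℝ) + 1)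
  have hc : ∀ n, 0 < c n := fun n => Nat.one_div_pos_of_nat
  have hAfin : ∀ n, (A n).Finite := fun n => (Finset.finite_toSet _).image _
  have hAne : ∀ n, (A n).Nonempty := fun n => ⟨d 0, 0, by simp, rfl⟩
  let w : ℕ → ℕ → V → ℝ := fun n i x => max 0 (Metric.infDist x (A n) + c n - dist x (d i))
  have hw0 : ∀ n i x, 0 ≤ w n i x := fun n i x => le_max_left _ _
  have hwL : ∀ n i x y, |w n i x - w n i y| ≤ 2 * dist x y := by
    intro n i x y
    have h1 : |w n i x - w n i y| ≤ |(Metric.infDist x (A n) + c n - dist x (d i)) -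
        (Metric.infDist y (A n) + c n - dist y (d i))| := by
      simpa [w] using abs_max_sub_max_le_abs (Metric.infDist x (A n) + c n - dist x (d i))
        (Metric.infDist y (A n) + c n - dist y (d i)) 0 |>.trans_eq' (by simp only [max_comm])
    have h2 := (Metric.lipschitz_infDist_pt (A n)).dist_le_mul x y
    have h3 := abs_dist_sub_le x y (d i)
    rw [Real.dist_eq] at h2
    simp only [NNReal.coe_one, one_mul] at h2
    refine h1.trans ?_
    rw [abs_le] at *
    constructor <;> linarith [h2.1, h2.2, h3.1, h3.2]
  let S : ℕ → V → ℝ := fun n x => ∑ i ∈ Finset.range (n+1), w n i x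
  have hS : ∀ n x, c n ≤ S n x := by
    intro n x
    obtain ⟨y, ⟨i, hi, rfl⟩, hy⟩ := (hAfin n).isCompact.exists_infDist_eq_dist (hAne n) x
    calc c n ≤ w n i x := by
          refine le_trans ?_ (le_max_right _ _)
          rw [hy]; linarith
      _ ≤ S n x := Finset.single_le_sum (f := fun i => w n i x) (fun j _ => hw0 n j x)
          (by simpa using hi)
  have hSp : ∀ n x, 0 < S n x := fun n x => (hc n).trans_le (hS n x)
  have hSL : ∀ n x y, |S n x - S n y| ≤ ((n : ℝ) + 1) * (2 * dist x y) := by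
    intro n x y
    simp only [S]
    rw [← Finset.sum_sub_distrib]
    refine (Finset.abs_sum_le_sum_abs _ _).trans ?_
    refine (Finset.sum_le_sum (fun i _ => hwL n i x y)).trans ?_
    simp
  let p : ℕ → ℕ → V → ℝ := fun n i x => w n i x / S n x
  have hp0 : ∀ n i x, 0 ≤ p n i x := fun n i x => div_nonneg (hw0 n i x) (hSp n x).le
  have hwS : ∀ n x, ∀ i ∈ Finset.range (n+1), w n i x ≤ S n x := fun n x i hi =>
    Finset.single_le_sum (f := fun i => w n i x) (fun j _ => hw0 n j x) hi
  have hp1 : ∀ n x, ∀ i ∈ Finset.range (n+1), p n i x ≤ 1 := fun n x i hi =>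
    div_le_one_of_le₀ (hwS n x i hi) (hSp n x).le
  have hps : ∀ n x, ∑ i ∈ Finset.range (n+1), p n i x = 1 := by
    intro n x
    simp only [p]
    rw [← Finset.sum_div]
    exact div_self (hSp n x).ne'
  have hpL : ∀ n x y, ∀ i ∈ Finset.range (n+1),
      |p n i x - p n i y| ≤ (2 + ((n : ℝ) + 1) * 2) / c n * dist x y := by
    intro n x y i hi
    have e : p n i x - p n i y =
        ((w n i x - w n i y) + p n i y * (S n y - S n x)) / S n x := by
      have h1 := (hSp n x).ne'
      have h2 := (hSp n y).ne'
      simp only [p]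
      field_simp
      ring
    rw [e, abs_div, abs_of_pos (hSp n x), div_mul_eq_mul_div _ (c n) (dist x y)]
    have h3 : |(w n i x - w n i y) + p n i y * (S n y - S n x)|
        ≤ (2 + ((n : ℝ) + 1) * 2) * dist x y := by
      refine (abs_add_le _ _).trans ?_
      rw [abs_mul, abs_of_nonneg (hp0 n i y)]
      have h4 := mul_le_mul (hp1 n y i hi) (hSL n y x) (abs_nonneg _) zero_le_one
      rw [dist_comm y x] at h4
      linarith [hwL n i x y]
    exact div_le_div₀ (by positivity) h3 (hc n) (hS n x)
  refine ⟨fun n x => ∑ i ∈ Finset.range (n+1), p n i x • f (d i), ?_, ?_, ?_⟩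
  · intro n
    refine ⟨_, LipschitzWith.of_dist_le' (K := ∑ i ∈ Finset.range (n+1),
      (2 + ((n : ℝ) + 1) * 2) / c n * ‖f (d i)‖) ?_⟩
    intro x y
    rw [dist_eq_norm, ← Finset.sum_sub_distrib, Finset.sum_mul]
    refine norm_sum_le_of_le _ fun i hi => ?_
    rw [← sub_smul, norm_smul, Real.norm_eq_abs, mul_right_comm]
    exact mul_le_mul_of_nonneg_right (hpL n x y i hi) (norm_nonneg _)
  · intro n
    refine isBounded_iff_forall_norm_le.2 ⟨∑ i ∈ Finset.range (n+1), ‖f (d i)‖, ?_⟩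
    rintro _ ⟨x, rfl⟩
    refine norm_sum_le_of_le _ fun i hi => ?_
    rw [norm_smul, Real.norm_eq_abs, abs_of_nonneg (hp0 n i x)]
    exact mul_le_of_le_one_left (norm_nonneg _) (hp1 n x i hi)
  · intro K hK
    rw [Metric.tendstoUniformlyOn_iff]
    intro ε hε
    have hu := hK.uniformContinuousAt_of_continuousAt f (fun a _ => hf.continuousAt)
      (Metric.dist_mem_uniformity (half_pos hε))
    obtain ⟨δ, hδ, hu⟩ := Metric.mem_uniformity_dist.1 hu
    obtain ⟨t, ht⟩ := hK.elim_finite_subcover (fun i => Metric.ball (d i) (δ/2))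
      (fun i => Metric.isOpen_ball) (fun x _ => by
        obtain ⟨i, hi⟩ := hd.exists_dist_lt x (half_pos hδ)
        exact Set.mem_iUnion.2 ⟨i, hi⟩)
    have hlim : Filter.Tendsto c Filter.atTop (nhds 0) := tendsto_one_div_add_atTop_nhds_zero_nat
    filter_upwards [Filter.eventually_ge_atTop (t.sup id),
      hlim.eventually (gt_mem_nhds (half_pos hδ))] with n hn hcn x hx
    have hD : Metric.infDist x (A n) < δ/2 := by
      obtain ⟨i, hi, hxi⟩ := Set.mem_iUnion₂.1 (ht hx)
      have hin : i ≤ n := (Finset.le_sup (f := id) hi).trans hn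
      refine (Metric.infDist_le_dist_of_mem (?_ : d i ∈ A n)).trans_lt hxi
      exact ⟨i, by simpa using Nat.lt_succ_of_le hin, rfl⟩
    have e : f x = ∑ i ∈ Finset.range (n+1), p n i x • f x := by
      rw [← Finset.sum_smul, hps, one_smul]
    have : dist (f x) (∑ i ∈ Finset.range (n+1), p n i x • f (d i)) ≤ ε / 2 := by
      rw [dist_eq_norm]
      nth_rewrite 1 [e]
      rw [← Finset.sum_sub_distrib]
      calc _ ≤ ∑ i ∈ Finset.range (n+1), p n i x * (ε/2) := by
            refine norm_sum_le_of_le _ fun i hi => ?_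
            rw [← smul_sub, norm_smul, Real.norm_eq_abs, abs_of_nonneg (hp0 n i x)]
            by_cases hxd : dist x (d i) < δ
            · refine mul_le_mul_of_nonneg_left ?_ (hp0 n i x)
              rw [← dist_eq_norm]
              exact le_of_lt (hu hxd hx)
            · have : w n i x = 0 := max_eq_left (by linarith)
              simp [p, this]
        _ = ε/2 := by rw [← Finset.sum_mul, hps, one_mul]
    linarith
end

section
/- Let (λ_n)_{n≥1} be a sequence of positive real numbers with λ_n ≥ c₀ for some c₀ > 0, and suppose there exists η₀ ∈ (0,1) such that for every η ∈ (0,η₀) the series ∑_{n≥1} λ_n^{−(1−η)} converges. Then for every η ∈ (0,η₀) there exist r ∈ (0,1) and a constant C > 0 such that for all λ > 0 and all t > 0 the series ∑_{n≥1} exp(−2(λ_n+λ)t) converges and satisfies ∑_{n≥1} exp(−2(λ_n+λ)t) ≤ C · λ^{−η} · t^{−r}. -/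
theorem exp_aux (x a : ℝ) (hx : 0 < x) (ha : 0 ≤ a) (ha1 : a ≤ 1) :
    Real.exp (-(2 * x)) ≤ x ^ (-a) := by
  rw [Real.rpow_neg hx.le, Real.exp_neg]
  apply inv_anti₀ (Real.rpow_pos_of_pos hx a)
  have h1 : x ≤ Real.exp x := by linarith [Real.add_one_le_exp x]
  calc x ^ a ≤ (Real.exp x) ^ a := Real.rpow_le_rpow hx.le h1 ha
    _ = Real.exp (x * a) := (Real.exp_mul x a).symm
    _ ≤ Real.exp (2 * x) := by
      apply Real.exp_le_exp.mpr
      nlinarith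

/-- Let `(Λ n)` be positive reals bounded below by `c₀ > 0` such that for some
`η₀ ∈ (0,1)` and every `η ∈ (0,η₀)` the series `∑ (Λ n)^(-(1-η))` converges.
Then for every `η ∈ (0,η₀)` there exist `r ∈ (0,1)` and `C > 0` such that for
all `λ > 0` and `t > 0` the series `∑ exp (-2(Λ n + λ) t)` converges with sum
at most `C * λ^(-η) * t^(-r)`. -/
theorem stmt_3 (Λ : ℕ → ℝ) (c₀ : ℝ) (hc₀ : 0 < c₀) (hΛpos : ∀ n, 0 < Λ n)
    (hΛlb : ∀ n, c₀ ≤ Λ n) (η₀ : ℝ) (hη₀ : η₀ ∈ Set.Ioo (0 : ℝ) 1)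
    (hsum : ∀ η ∈ Set.Ioo (0 : ℝ) η₀, Summable (fun n => (Λ n) ^ (-(1 - η)))) :
    ∀ η ∈ Set.Ioo (0 : ℝ) η₀, ∃ r ∈ Set.Ioo (0 : ℝ) 1, ∃ C : ℝ, 0 < C ∧
      ∀ l t : ℝ, 0 < l → 0 < t →
        Summable (fun n => Real.exp (-(2 * (Λ n + l) * t))) ∧
        ∑' n, Real.exp (-(2 * (Λ n + l) * t)) ≤ C * l ^ (-η) * t ^ (-r) := by
  intro η ⟨hη, hη'⟩
  obtain ⟨h0, h1⟩ := hη₀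
  obtain ⟨μ, hμ, hμ'⟩ := exists_between hη'
  have hs := hsum μ ⟨by linarith, hμ'⟩
  have hS : 0 ≤ ∑' n, (Λ n) ^ (-(1 - μ)) :=
    tsum_nonneg fun n => Real.rpow_nonneg (hΛpos n).le _
  refine ⟨1 - μ + η, ⟨by linarith, by linarith⟩, (∑' n, (Λ n) ^ (-(1 - μ))) + 1,
    by linarith, ?_⟩
  intro l t hl ht
  have key : ∀ n, Real.exp (-(2 * (Λ n + l) * t)) ≤
      (Λ n) ^ (-(1 - μ)) * (l ^ (-η) * t ^ (-(1 - μ + η))) := by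
    intro n
    have hp := hΛpos n
    have e1 := exp_aux (Λ n * t) (1 - μ) (by positivity) (by linarith) (by linarith)
    have e2 := exp_aux (l * t) η (by positivity) (by linarith) (by linarith)
    rw [Real.mul_rpow hp.le ht.le] at e1
    rw [Real.mul_rpow hl.le ht.le] at e2
    have e3 : t ^ (-(1 - μ + η)) = t ^ (-(1 - μ)) * t ^ (-η) := by
      rw [← Real.rpow_add ht]
      congr 1
      ring
    calc Real.exp (-(2 * (Λ n + l) * t))
        = Real.exp (-(2 * (Λ n * t))) * Real.exp (-(2 * (l * t))) := by
          rw [← Real.exp_add]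
          congr 1
          ring
      _ ≤ ((Λ n) ^ (-(1 - μ)) * t ^ (-(1 - μ))) * (l ^ (-η) * t ^ (-η)) := by
          gcongr
      _ = _ := by
          rw [e3]
          ring
  have hs2 := hs.mul_right (l ^ (-η) * t ^ (-(1 - μ + η)))
  have hs3 : Summable (fun n => Real.exp (-(2 * (Λ n + l) * t))) :=
    Summable.of_nonneg_of_le (fun n => (Real.exp_pos _).le) key hs2
  refine ⟨hs3, ?_⟩
  calc _ ≤ ∑' n, (Λ n) ^ (-(1 - μ)) * (l ^ (-η) * t ^ (-(1 - μ + η))) :=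
        hs3.tsum_le_tsum key hs2
    _ = (∑' n, (Λ n) ^ (-(1 - μ))) * (l ^ (-η) * t ^ (-(1 - μ + η))) := tsum_mul_right
    _ ≤ ((∑' n, (Λ n) ^ (-(1 - μ))) + 1) * (l ^ (-η) * t ^ (-(1 - μ + η))) := by
        gcongr
        linarith
    _ = _ := by ring
end

section
/- Let μ and ν be probability measures on a measurable space (X, 𝓑) with μ absolutely continuous with respect to ν and with finite relative entropy H(μ|ν) = ∫_X log(dμ/dν) dμ. Then for every measurable set A ∈ 𝓑 and every real number N > 1, one has ν(A) ≥ μ(A)/N − (H(μ|ν) + log 2)/(N · log N). -/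
open MeasureTheory

/-- Let `μ` and `ν` be probability measures with `μ ≪ ν` and finite relative
entropy `H(μ|ν) = ∫ log (dμ/dν) dμ`. Then for every measurable set `A` and
every real `N > 1`, one has `ν(A) ≥ μ(A)/N − (H(μ|ν) + log 2)/(N log N)`. -/
theorem stmt_14 {X : Type*} [MeasurableSpace X] (μ ν : Measure X)
    [IsProbabilityMeasure μ] [IsProbabilityMeasure ν]
    (hac : μ ≪ ν)
    (hint : Integrable (fun x => Real.log (μ.rnDeriv ν x).toReal) μ) :
    ∀ A : Set X, MeasurableSet A → ∀ N : ℝ, 1 < N →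
      (ν A).toReal ≥ (μ A).toReal / N -
        ((∫ x, Real.log (μ.rnDeriv ν x).toReal ∂μ) + Real.log 2) / (N * Real.log N) := by
  intro A hA N hN
  have hL : 0 < Real.log N := Real.log_pos hN
  set L := Real.log N with hLdef
  have hl2 : (1:ℝ)/2 < Real.log 2 := by linarith [Real.log_two_gt_d9]
  have hh : Integrable (fun x => (ν.rnDeriv μ x).toReal) μ := Measure.integrable_toReal_rnDeriv
  have hI1 : ∫ x in A, (ν.rnDeriv μ x).toReal ∂μ ≤ (ν A).toReal :=
    Measure.setIntegral_toReal_rnDeriv_le (measure_ne_top ν A)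
  have hI2 : ∫ x, (ν.rnDeriv μ x).toReal ∂μ ≤ 1 := by
    have := Measure.setIntegral_toReal_rnDeriv_le (μ := ν) (ν := μ) (s := Set.univ)
      (measure_ne_top ν _)
    simpa using this
  have i1 : Integrable (fun x => (L * N) * A.indicator (fun x => (ν.rnDeriv μ x).toReal) x) μ :=
    (hh.indicator hA).const_mul _
  have i2 : Integrable (fun x => (L * N) * A.indicator (fun x => (ν.rnDeriv μ x).toReal) x
      + Real.log (μ.rnDeriv ν x).toReal) μ := i1.add hint
  have i3 : Integrable (fun x => ((L * N) * A.indicator (fun x => (ν.rnDeriv μ x).toReal) x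
      + Real.log (μ.rnDeriv ν x).toReal) + (Real.log 2 - 1/2)) μ := i2.add (integrable_const _)
  have key : ∫ x, A.indicator (fun _ => L) x ∂μ ≤
      ∫ x, (((L * N) * A.indicator (fun x => (ν.rnDeriv μ x).toReal) x
        + Real.log (μ.rnDeriv ν x).toReal) + (Real.log 2 - 1/2))
        + (1/2) * (ν.rnDeriv μ x).toReal ∂μ := by
    refine integral_mono_ae ((integrable_const L).indicator hA) ?_ ?_
    · exact i3.add (hh.const_mul _)
    · filter_upwards [Measure.inv_rnDeriv hac, Measure.rnDeriv_pos hac,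
        hac.ae_le (Measure.rnDeriv_lt_top μ ν)] with x h1 h2 h3
      have hf : 0 < (μ.rnDeriv ν x).toReal := ENNReal.toReal_pos h2.ne' h3.ne
      have he : (ν.rnDeriv μ x).toReal = ((μ.rnDeriv ν x).toReal)⁻¹ := by
        rw [← h1, Pi.inv_apply, ENNReal.toReal_inv]
      have hi1 : x ∈ A → A.indicator (fun x => (ν.rnDeriv μ x).toReal) x
          = ((μ.rnDeriv ν x).toReal)⁻¹ := fun hx => by
        rw [Set.indicator_of_mem hx, he]
      have hi2 : x ∉ A → A.indicator (fun x => (ν.rnDeriv μ x).toReal) x = 0 :=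
        fun hx => Set.indicator_of_notMem hx _
      simp only [he]
      generalize A.indicator (fun x => (ν.rnDeriv μ x).toReal) x = g at hi1 hi2 ⊢
      generalize (μ.rnDeriv ν x).toReal = f at hf hi1 ⊢
      have hinv : 0 < f⁻¹ := inv_pos.2 hf
      have hbase : 0 ≤ Real.log f + (Real.log 2 - 1/2) + 1/2 * f⁻¹ := by
        have h := Real.log_le_sub_one_of_pos (x := (2 * f)⁻¹) (by positivity)
        rw [Real.log_inv, Real.log_mul (by norm_num) hf.ne', mul_inv] at h
        linarith
      by_cases hxA : x ∈ A
      · rw [hi1 hxA, Set.indicator_of_mem hxA]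
        rcases le_or_gt f N with hfN | hfN
        · have : 1 ≤ N * f⁻¹ := by
            rw [← div_eq_mul_inv, le_div_iff₀ hf]; linarith
          nlinarith
        · have : L ≤ Real.log f := Real.log_le_log (by linarith) hfN.le
          have : 0 ≤ L * N * f⁻¹ := by positivity
          linarith
      · rw [hi2 hxA, Set.indicator_of_notMem hxA]
        linarith
  rw [integral_add i3 (hh.const_mul _), integral_add i2 (integrable_const _), integral_add i1 hint,
    integral_const_mul, integral_const_mul, integral_indicator hA, integral_indicator hA] at key
  simp only [integral_const, smul_eq_mul, measureReal_def, Measure.restrict_apply_univ,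
    measure_univ, ENNReal.toReal_one, one_mul] at key
  have hLN : 0 < L * N := by positivity
  have h5 := mul_le_mul_of_nonneg_left hI1 hLN.le
  generalize (∫ x, Real.log (μ.rnDeriv ν x).toReal ∂μ) = H at *
  have h6 : (μ A).toReal / N - (H + Real.log 2) / (N * L)
      = ((μ A).toReal * L - (H + Real.log 2)) / (N * L) := by
    field_simp
  rw [ge_iff_le, h6, div_le_iff₀ (by positivity)]
  linarith
end
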